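/- Let k be a field of characteristic 0, K/k a field extension, G a finite group, and ρ : G → GL_n(K) an arbitrary finite-dimensional representation. Then ρ descends to an intermediate field k ⊆ K₀ ⊆ K whose transcendence degree over k is at most |G|²/4; that is, there exists an intermediate field K₀ with 4·trdeg_k(K₀) ≤ |G|² and a representation ρ' : G → GL_n(K₀) whose base change to K is K-equivalent to ρ. -/

import Mathlib

open Matrix

/-- A representation `ρ : G → GL_n(K)` descends to an intermediate field `K₀` of `K/k` if
it is `K`-equivalent (conjugate) to the base change of some representation over `K₀`. -/
def Descends {k K : Type*} [Field k] [Field K] [Algebra k K] {G : Type*} [Group G] {n : ℕ}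
    (ρ : G →* GL (Fin n) K) (K₀ : IntermediateField k K) : Prop :=
  ∃ ρ' : G →* GL (Fin n) K₀, ∃ M : GL (Fin n) K,
    ∀ g, ρ g = M * Units.map ((algebraMap K₀ K).mapMatrix).toMonoidHom (ρ' g) * M⁻¹

/-- The transcendence degree of `K₀` over `k` is at most `N/4`: every algebraically
independent (over `k`) finite subset `s` of `K₀` satisfies `4 * #s ≤ N`. -/
def FourTrdegLE {k K : Type*} [Field k] [Field K] [Algebra k K]
    (K₀ : IntermediateField k K) (N : ℕ) : Prop :=
  ∀ s : Finset K₀,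
    AlgebraicIndependent k (fun x : {y : K₀ // y ∈ s} => (x : K₀)) → 4 * s.card ≤ N

/-!
Let `I` be a left ideal of `K[G]` which contains exactly one simple module of each isomorphism type.
As a subspace of `K ^ |G|` of some dimension `d`, it is the graph of a linear map from `d` of the
coordinates to the remaining ones, so it is defined over any field containing the
`d * (|G| - d) ≤ |G| ^ 2 / 4` entries of the matrix of that map.

The simple submodules of `I` are its multiples by central idempotents of `K[G]`, whose coefficients
are algebraic over `k`: up to the factor `|G|` they are traces of operators with eigenvalues `0` or
roots of unity. Hence all simple modules, and so all representations, are defined over the algebraic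
closure in `K` of the field generated over `k` by these entries.
-/

section RationalSubspaces

open Module

variable {K V ι : Type*} [Field K] [AddCommGroup V] [Module K V]

/-- The subspace `W` of `V` is defined over the subfield `L`, with respect to the `L`-form of `V`
spanned by the basis `B`: it is spanned by its vectors with coordinates in `L`. Only the nontrivial
inclusion is recorded. -/
def IsDefinedOver (L : Subfield K) (B : Basis ι K V) (W : Submodule K V) : Prop :=
  W ≤ Submodule.span K {x | x ∈ W ∧ ∀ i, B.repr x i ∈ L}

lemma exists_basis_repr_eq_repr [Finite ι] (B : Basis ι K V) (W : Submodule K V) :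
    ∃ (P : Set ι) (b : Basis P K W), ∀ (x : W) (i : P), b.repr x i = B.repr x i := by
  classical
  have := B.finiteDimensional_of_finite
  let φ (i : ι) : Dual K W := W.subtype.dualMap (B.coord i)
  have hφ : Submodule.span K (Set.range φ) = ⊤ := by
    rw [Set.range_comp', ← Submodule.map_span, ← B.coe_dualBasis, B.dualBasis.span_eq,
      ← LinearMap.range_eq_map, LinearMap.range_eq_top]
    exact LinearMap.dualMap_surjective_of_injective W.subtype_injective
  obtain ⟨P, -, -, hspan, hli⟩ := exists_linearIndepOn_extension
    (linearIndepOn_empty K φ) (Set.empty_subset Set.univ)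
  rw [Set.image_univ, ← Submodule.span_le, hφ, Set.image_eq_range] at hspan
  let c : Basis P K (Dual K W) := .mk hli hspan
  have hc (i : P) : c i = φ i := Basis.mk_apply ..
  refine ⟨P, c.dualBasis.map (evalEquiv K W).symm, fun x i => ?_⟩
  rw [Basis.map_repr, LinearEquiv.trans_apply, LinearEquiv.symm_symm, Basis.dualBasis_repr,
    evalEquiv_apply, hc]
  rfl

lemma exists_finset_isDefinedOver [Finite ι] (B : Basis ι K V) (W : Submodule K V) :
    ∃ S : Finset K, 4 * S.card ≤ Nat.card ι ^ 2 ∧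
      ∀ L : Subfield K, (S : Set K) ⊆ L → IsDefinedOver L B W := by
  classical
  have := Fintype.ofFinite ι
  obtain ⟨P, b, hb⟩ := exists_basis_repr_eq_repr B W
  let c (p : P × ↥Pᶜ) : K := B.repr (b p.1) p.2
  refine ⟨Finset.univ.image c, ?_, fun L hL => ?_⟩
  · calc 4 * (Finset.univ.image c).card
        ≤ 4 * (Fintype.card P * Fintype.card ↥Pᶜ) := by
          grw [Finset.card_image_le, Finset.card_univ, Fintype.card_prod]
      _ ≤ (Fintype.card P + Fintype.card ↥Pᶜ) ^ 2 := by
          rw [← mul_assoc]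
          exact four_mul_le_sq_add _ _
      _ = Nat.card ι ^ 2 := by
          rw [Nat.card_eq_fintype_card, ← Fintype.card_congr (Equiv.Set.sumCompl P),
            Fintype.card_sum]
  · have hmem (j : P) (i : ι) : B.repr (b j) i ∈ L := by
      by_cases hi : i ∈ P
      · rw [← hb (b j) ⟨i, hi⟩, b.repr_self, Finsupp.single_apply]
        split_ifs
        exacts [one_mem L, zero_mem L]
      · exact hL (Finset.mem_coe.2 (Finset.mem_image_of_mem c (Finset.mem_univ (j, ⟨i, hi⟩))))
    have hW : W = Submodule.span K (Set.range fun j => (b j : V)) := by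
      rw [Set.range_comp' Subtype.val, ← W.coe_subtype, ← Submodule.map_span, b.span_eq,
        Submodule.map_subtype_top]
    refine hW.trans_le (Submodule.span_mono ?_)
    rintro _ ⟨j, rfl⟩
    exact ⟨(b j).2, hmem j⟩

lemma linearIndependent_of_repr_mem [Finite ι] {κ : Type*} (B : Basis ι K V) (L : Subfield K)
    {v : κ → V} (hv : ∀ j i, B.repr (v j) i ∈ L) (hli : LinearIndependent L v) :
    LinearIndependent K v := by
  let w (j : κ) (i : ι) : L := ⟨B.repr (v j) i, hv j i⟩
  have hw : B.equivFun ∘ v = fun j => algebraMap L K ∘ w j := rfl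
  have hwL : B.equivFun.restrictScalars L ∘ v = Pi.algebraMap ι L K ∘ w := rfl
  rw [← B.equivFun.toLinearMap.linearIndependent_iff B.equivFun.ker, LinearEquiv.coe_coe, hw,
    linearIndependent_algebraMap_comp_iff]
  refine .of_comp (Pi.algebraMap ι L K) ?_
  rw [← hwL]
  exact hli.map' _ (B.equivFun.restrictScalars L).ker

lemma mem_span_range_iff_repr_mem_subfield (B : Basis ι K V) (L : Subfield K) {x : V} :
    x ∈ Submodule.span L (Set.range B) ↔ ∀ i, B.repr x i ∈ L := by
  rw [B.mem_span_iff_repr_mem L]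
  exact forall_congr' fun i => by simp [show ⇑(algebraMap L K) = Subtype.val from rfl]

namespace IsDefinedOver

variable {L : Subfield K} {B : Basis ι K V} {W : Submodule K V}

lemma map {V' ι' : Type*} [AddCommGroup V'] [Module K V'] {B' : Basis ι' K V'}
    (hW : IsDefinedOver L B W) (T : V →ₗ[K] V')
    (hT : ∀ x, (∀ i, B.repr x i ∈ L) → ∀ i, B'.repr (T x) i ∈ L) :
    IsDefinedOver L B' (W.map T) := by
  refine (Submodule.map_mono hW).trans ?_
  rw [Submodule.map_span]
  refine Submodule.span_mono ?_
  rintro _ ⟨x, ⟨hx, hxL⟩, rfl⟩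
  exact ⟨Submodule.mem_map_of_mem hx, hT x hxL⟩

lemma exists_basis [Finite ι] (hW : IsDefinedOver L B W) :
    ∃ b : Basis (Fin (finrank K W)) K W, (∀ j i, B.repr (b j) i ∈ L) ∧
      ∀ x : W, (∀ i, B.repr x i ∈ L) → ∀ j, b.repr x j ∈ L := by
  have := B.finiteDimensional_of_finite
  let W₀ : Submodule L V := W.restrictScalars L ⊓ Submodule.span L (Set.range B)
  have mem_W₀ {x : V} : x ∈ W₀ ↔ x ∈ W ∧ ∀ i, B.repr x i ∈ L := by
    rw [Submodule.mem_inf, Submodule.restrictScalars_mem, mem_span_range_iff_repr_mem_subfield]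
  let b₀ := Basis.ofVectorSpace L W₀
  let incl : W₀ →ₗ[L] W := Submodule.inclusion (inf_le_left : W₀ ≤ W.restrictScalars L)
  have hrat (j) : ∀ i, B.repr (incl (b₀ j)) i ∈ L := (mem_W₀.1 (b₀ j).2).2
  have hspan : Submodule.span L (Set.range (incl ∘ b₀)) = LinearMap.range incl := by
    rw [Set.range_comp, ← Submodule.map_span, b₀.span_eq, LinearMap.range_eq_map]
  have hli : LinearIndependent K (incl ∘ b₀) :=
    .of_comp W.subtype <| linearIndependent_of_repr_mem B L hrat <|
      b₀.linearIndependent.map' W₀.subtype W₀.ker_subtype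
  have htop : ⊤ ≤ Submodule.span K (Set.range (incl ∘ b₀)) := by
    rw [← Submodule.span_span_of_tower L K, hspan,
      ← Submodule.map_le_map_iff_of_injective W.subtype_injective, Submodule.map_subtype_top,
      Submodule.map_span]
    refine hW.trans (Submodule.span_mono fun x hx => ?_)
    exact ⟨⟨x, hx.1⟩, ⟨⟨x, mem_W₀.2 hx⟩, rfl⟩, rfl⟩
  let b := Basis.mk hli htop
  have hb : ⇑b = incl ∘ b₀ := Basis.coe_mk ..
  have := hli.finite
  let e := Finite.equivFinOfCardEq (finrank_eq_nat_card_basis b).symm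
  refine ⟨b.reindex e, fun j => ?_, fun x hx j => ?_⟩
  · rw [b.reindex_apply, hb]
    exact hrat _
  · rw [b.repr_reindex_apply]
    refine (mem_span_range_iff_repr_mem_subfield b L).1 ?_ _
    rw [hb, hspan]
    exact ⟨⟨x, mem_W₀.2 ⟨x.2, hx⟩⟩, rfl⟩

end IsDefinedOver

end RationalSubspaces

section IntegralTraces

open Module

variable {R K : Type*} [CommRing R] [Field K] [Algebra R K]

lemma isIntegral_of_pow_eq_self {A : Type*} [Ring A] [Algebra R A] {x : A} {n : ℕ} (hn : 1 < n)
    (hx : x ^ n = x) : IsIntegral R x := by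
  nontriviality R
  refine ⟨.X ^ n - .X, Polynomial.monic_X_pow_sub (by simpa using hn), ?_⟩
  rw [Polynomial.eval₂_sub, Polynomial.eval₂_X_pow, Polynomial.eval₂_X, hx, sub_self]

lemma isIntegral_of_hasEigenvalue {V : Type*} [AddCommGroup V] [Module K V] [Module R V]
    [IsScalarTower R K V] {f : End K V} (hf : IsIntegral R f) {μ : K} (hμ : f.HasEigenvalue μ) :
    IsIntegral R μ := by
  obtain ⟨v, hv⟩ := hμ.exists_hasEigenvector
  obtain ⟨p, hp, hpf⟩ := hf
  refine ⟨p, hp, ?_⟩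
  have h := End.aeval_apply_of_hasEigenvector (p := p.map (algebraMap R K)) hv
  rw [Polynomial.aeval_map_algebraMap, Polynomial.aeval_def, hpf, Polynomial.eval_map,
    LinearMap.zero_apply] at h
  exact (smul_eq_zero.1 h.symm).resolve_right hv.2

lemma isIntegral_matrix_trace {n : Type*} [Fintype n] [DecidableEq n] {A : Matrix n n K}
    (hA : IsIntegral R A) : IsIntegral R A.trace := by
  let F := AlgebraicClosure K
  let toEnd : Matrix n n K →ₐ[R] End F (n → F) :=
    ((Matrix.toLinAlgEquiv' : Matrix n n F ≃ₐ[F] _).toAlgHom.restrictScalars R).comp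
      ((Algebra.ofId K F).restrictScalars R).mapMatrix
  rw [← isIntegral_algebraMap_iff (algebraMap K F).injective, ← RingHom.coe_coe,
    AddMonoidHom.map_trace, Matrix.trace_eq_sum_roots_charpoly]
  refine IsIntegral.multiset_sum fun μ hμ => isIntegral_of_hasEigenvalue (hA.map toEnd) ?_
  rw [End.hasEigenvalue_iff_isRoot_charpoly]
  have h : (toEnd A).charpoly = (A.map (algebraMap K F)).charpoly := Matrix.charpoly_toLin' _
  rw [h]
  exact Polynomial.isRoot_of_mem_roots hμ

end IntegralTraces

section Coefficients

variable {R K G : Type*} [CommRing R] [Field K] [Algebra R K] [Group G]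

lemma trace_leftMulMatrix_basis [Fintype G] [DecidableEq G] (x : MonoidAlgebra R G) :
    (Algebra.leftMulMatrix (MonoidAlgebra.basis G R) x).trace = Nat.card G * x.coeff 1 := by
  simp [Matrix.trace, Algebra.leftMulMatrix_eq_repr_mul, MonoidAlgebra.basis,
    MonoidAlgebra.coeffLinearEquiv]

open MonoidAlgebra in
lemma isIntegral_card_mul_coeff_of_isIdempotentElem [Finite G] {e : MonoidAlgebra K G}
    (he : IsIdempotentElem e) (hcomm : ∀ x, Commute x e) (g : G) :
    IsIntegral R (Nat.card G * e.coeff g) := by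
  classical
  have := Fintype.ofFinite G
  let x := single g⁻¹ (1 : K) * e
  have hx : x ^ (Nat.card G + 1) = x := by
    rw [(hcomm _).mul_pow, he.pow_succ_eq, pow_succ, single_pow, pow_card_eq_one', one_pow,
      ← one_def, one_mul]
  have hint : IsIntegral R x := isIntegral_of_pow_eq_self (lt_add_of_pos_left 1 Nat.card_pos) hx
  have htrace := isIntegral_matrix_trace
    (hint.map ((Algebra.leftMulMatrix (MonoidAlgebra.basis G K)).restrictScalars R))
  rwa [AlgHom.restrictScalars_apply, trace_leftMulMatrix_basis, coeff_single_mul_apply,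
    inv_inv, mul_one, one_mul] at htrace

lemma isAlgebraic_coeff_of_isIdempotentElem {k : Type*} [Field k] [Algebra k K] [Finite G]
    [NeZero (Nat.card G : K)] {e : MonoidAlgebra K G} (he : IsIdempotentElem e)
    (hcomm : ∀ x, Commute x e) (g : G) : IsAlgebraic k (e.coeff g) := by
  rw [← inv_mul_cancel_left₀ (NeZero.ne (Nat.card G : K)) (e.coeff g)]
  exact (isAlgebraic_natCast _).inv.mul
    (isIntegral_card_mul_coeff_of_isIdempotentElem he hcomm g).isAlgebraic

end Coefficients

section CentralIdempotents

variable {R ι : Type*} [Ring R] [DecidableEq ι] (V : ι → Ideal R) [DirectSum.Decomposition V]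

open DirectSum

lemma commute_idempotent [Finite ι] [∀ i, (V i).IsTwoSided] (x : R) (i : ι) :
    Commute x (idempotent V i) := by
  have := Fintype.ofFinite ι
  have hcomplete := (completeOrthogonalIdempotents_idempotent V).complete
  have hpeirce {i j : ι} (h : i ≠ j) : idempotent V i * x * idempotent V j = 0 := by
    rw [← decompose_eq_mul_idempotent]
    exact decompose_of_mem_ne V ((V i).mul_mem_right x (SetLike.coe_mem _)) h
  calc x * idempotent V i = (∑ j, idempotent V j) * x * idempotent V i := by
        rw [hcomplete, one_mul]
    _ = idempotent V i * x * idempotent V i := by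
        rw [Finset.sum_mul, Finset.sum_mul, Fintype.sum_eq_single i fun j hj => hpeirce hj]
    _ = idempotent V i * x * ∑ j, idempotent V j := by
        rw [Finset.mul_sum, Fintype.sum_eq_single i fun j hj => hpeirce hj.symm]
    _ = idempotent V i * x := by rw [hcomplete, mul_one]

lemma map_toSpanSingleton_idempotent_iSup {S : ι → Ideal R} (hS : ∀ i, S i ≤ V i) (i : ι) :
    Submodule.map (LinearMap.toSpanSingleton R R (idempotent V i)) (⨆ j, S j) = S i := by
  rw [Submodule.map_iSup]
  refine le_antisymm (iSup_le fun j => ?_) (le_iSup_of_le i fun x hx => ⟨x, hx, ?_⟩)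
  · rintro _ ⟨x, hx, rfl⟩
    rw [LinearMap.toSpanSingleton_apply, smul_eq_mul, ← decompose_eq_mul_idempotent]
    obtain rfl | hij := eq_or_ne j i
    · rwa [decompose_of_mem_same V (hS j hx)]
    · rw [decompose_of_mem_ne V (hS j hx) hij]
      exact zero_mem _
  · rw [LinearMap.toSpanSingleton_apply, smul_eq_mul, ← decompose_eq_mul_idempotent,
      decompose_of_mem_same V (hS i hx)]

end CentralIdempotents

lemma exists_ideal_forall_simple_linearEquiv_map (R : Type*) [Ring R] [IsSemisimpleRing R] :
    ∃ I : Ideal R, ∀ (M : Type*) [AddCommGroup M] [Module R M] [IsSimpleModule R M],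
      ∃ e : R, IsIdempotentElem e ∧ (∀ x, Commute x e) ∧
        Nonempty (M ≃ₗ[R] Submodule.map (LinearMap.toSpanSingleton R R e) I) := by
  classical
  let V (c : isotypicComponents R R) : Ideal R := c
  have := Fintype.ofFinite (isotypicComponents R R)
  have (c : isotypicComponents R R) : (V c).IsTwoSided :=
    isFullyInvariant_iff_isTwoSided.1 (.of_mem_isotypicComponents c.2)
  have hV : DirectSum.IsInternal V := DirectSum.isInternal_submodule_of_iSupIndep_of_iSup_eq_top
    ((sSupIndep_iff _).1 (sSupIndep_isotypicComponents R R))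
    (by rw [← sSup_eq_iSup', sSup_isotypicComponents])
  let := hV.chooseDecomposition
  choose S hS hVS using fun c : isotypicComponents R R => c.2
  have hSV (c : isotypicComponents R R) : S c ≤ V c :=
    (S c).le_isotypicComponent.trans_eq (hVS c).symm
  refine ⟨⨆ c, S c, fun M _ _ _ => ?_⟩
  obtain ⟨N, ⟨f⟩⟩ := IsSemisimpleRing.exists_linearEquiv_ideal_of_isSimpleModule R M
  have : IsSimpleModule R N := .congr f.symm
  let c : isotypicComponents R R := ⟨isotypicComponent R R N, N, this, rfl⟩
  refine ⟨DirectSum.idempotent V c, DirectSum.isIdempotentElem_idempotent V c,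
    fun x => commute_idempotent V x c, ?_⟩
  rw [map_toSpanSingleton_idempotent_iSup V hSV]
  have hN : IsIsotypicOfType R (V c) N := .isotypicComponent R R N
  obtain ⟨g⟩ := isIsotypicOfType_submodule_iff.1 hN (S c) (hSV c)
  exact ⟨f.trans g.symm⟩

section Forms

open Module MonoidAlgebra

lemma coeff_mul_mem {R σ M : Type*} [Semiring R] [SetLike σ R] [SubsemiringClass σ R] [Mul M]
    {L : σ} {x y : MonoidAlgebra R M} (hx : ∀ m, x.coeff m ∈ L) (hy : ∀ m, y.coeff m ∈ L) (m : M) :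
    (x * y).coeff m ∈ L := by
  classical
  rw [coeff_mul]
  refine sum_mem fun a _ => sum_mem fun b _ => ?_
  dsimp only
  split_ifs
  exacts [mul_mem (hx a) (hy b), zero_mem L]

variable {K G : Type*} [Field K]

/-- The `K[G]`-module `V` is finite-dimensional over `K` and has an `L`-form: `G` acts on it, in a
suitable `K`-basis, by matrices with entries in `L`. -/
def HasForm (L : Subfield K) (G V : Type*) [Monoid G] [AddCommGroup V] [Module K V]
    [Module (MonoidAlgebra K G) V] : Prop :=
  ∃ (m : ℕ) (b : Basis (Fin m) K V), ∀ (g : G) (i j : Fin m), b.repr (single g (1 : K) • b j) i ∈ L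

namespace HasForm

variable {L : Subfield K} [Monoid G]

lemma of_basis {V κ : Type*} [AddCommGroup V] [Module K V] [Module (MonoidAlgebra K G) V]
    [Finite κ] (b : Basis κ K V)
    (hb : ∀ (g : G) (i j : κ), b.repr (single g (1 : K) • b j) i ∈ L) : HasForm L G V := by
  refine ⟨_, b.reindex (Finite.equivFin κ), fun g i j => ?_⟩
  rw [b.repr_reindex_apply, b.reindex_apply]
  exact hb g _ _

lemma congr {V W : Type*} [AddCommGroup V] [Module K V] [Module (MonoidAlgebra K G) V]
    [IsScalarTower K (MonoidAlgebra K G) V] [AddCommGroup W] [Module K W]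
    [Module (MonoidAlgebra K G) W] [IsScalarTower K (MonoidAlgebra K G) W]
    (e : V ≃ₗ[MonoidAlgebra K G] W) (h : HasForm L G V) : HasForm L G W := by
  obtain ⟨m, b, hb⟩ := h
  exact ⟨m, b.map (e.restrictScalars K), fun g i j => by simpa using hb g i j⟩

lemma pi {κ : Type*} [Finite κ] {V : κ → Type*} [∀ i, AddCommGroup (V i)] [∀ i, Module K (V i)]
    [∀ i, Module (MonoidAlgebra K G) (V i)] (h : ∀ i, HasForm L G (V i)) :
    HasForm L G (Π i, V i) := by
  classical
  have := Fintype.ofFinite κ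
  choose m b hb using h
  refine of_basis (Pi.basis b) ?_
  rintro g ⟨p, i⟩ ⟨q, j⟩
  rw [Pi.basis_repr, Pi.basis_apply, Pi.smul_apply]
  obtain rfl | hpq := eq_or_ne p q
  · rw [Pi.single_eq_same]
    exact hb p g i j
  · rw [Pi.single_eq_of_ne hpq, smul_zero, map_zero]
    exact zero_mem L

end HasForm

variable [Group G] [Finite G]

lemma IsDefinedOver.hasForm {L : Subfield K} {J : Ideal (MonoidAlgebra K G)}
    (hJ : IsDefinedOver L (MonoidAlgebra.basis G K) (J.restrictScalars K)) : HasForm L G J := by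
  obtain ⟨b, hbL, hb⟩ := hJ.exists_basis
  refine ⟨_, b, fun g i j => hb _ (fun h => ?_) i⟩
  change (single g (1 : K) * (b j : MonoidAlgebra K G)).coeff h ∈ L
  rw [coeff_single_mul_apply, one_mul]
  exact hbL j _

lemma exists_finset_forall_hasForm (k : Type*) [Field k] [Algebra k K] [NeZero (Nat.card G : K)] :
    ∃ S : Finset K, 4 * S.card ≤ Nat.card G ^ 2 ∧ ∀ L : Subfield K, (S : Set K) ⊆ L →
      (∀ x, IsAlgebraic k x → x ∈ L) → ∀ (V : Type*) [AddCommGroup V] [Module K V]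
        [Module (MonoidAlgebra K G) V] [IsScalarTower K (MonoidAlgebra K G) V]
        [FiniteDimensional K V], HasForm L G V := by
  obtain ⟨I, hI⟩ := exists_ideal_forall_simple_linearEquiv_map (MonoidAlgebra K G)
  obtain ⟨S, hS, hIS⟩ := exists_finset_isDefinedOver (MonoidAlgebra.basis G K) (I.restrictScalars K)
  refine ⟨S, hS, fun L hSL hL V _ _ _ _ _ => ?_⟩
  have hsimple (M : Submodule (MonoidAlgebra K G) V) [IsSimpleModule (MonoidAlgebra K G) M] :
      HasForm L G M := by
    obtain ⟨e, he, hcomm, ⟨f⟩⟩ := hI M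
    have heL (g : G) : e.coeff g ∈ L := hL _ (isAlgebraic_coeff_of_isIdempotentElem he hcomm g)
    refine .congr f.symm (IsDefinedOver.hasForm ?_)
    exact (hIS L hSL).map ((LinearMap.toSpanSingleton _ _ e).restrictScalars K)
      fun x hx => coeff_mul_mem hx heL
  have : Module.Finite (MonoidAlgebra K G) V := .of_restrictScalars_finite K _ V
  obtain ⟨n, M, f, hM⟩ := IsSemisimpleModule.exists_linearEquiv_fin_dfinsupp (MonoidAlgebra K G) V
  exact (HasForm.pi fun i => hsimple (M i)).congr
    (f.trans DFinsupp.linearEquivFunOnFintype).symm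

end Forms

section Descent

open Module

variable {k K G : Type*} [Field k] [Field K] [Algebra k K] [Group G] {K₀ : IntermediateField k K}
  {n : ℕ} {ρ : G →* GL (Fin n) K}

lemma descends_of_conj_mem (M : GL (Fin n) K) (h : ∀ g i j, (M⁻¹ * ρ g * M).1 i j ∈ K₀) :
    Descends ρ K₀ := by
  let φ := (algebraMap K₀ K).mapMatrix (m := Fin n)
  have hφ : Function.Injective φ := Matrix.map_injective (algebraMap K₀ K).injective
  let σ (g : G) : Matrix (Fin n) (Fin n) K₀ := .of fun i j => ⟨(M⁻¹ * ρ g * M).1 i j, h g i j⟩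
  have hσ (g : G) : φ (σ g) = (M⁻¹ * ρ g * M).1 := rfl
  let σ' : G →* Matrix (Fin n) (Fin n) K₀ :=
    { toFun := σ
      map_one' := hφ (by rw [hσ, map_one, map_one, mul_one, inv_mul_cancel, Units.val_one])
      map_mul' := fun g g' => hφ (by
        rw [map_mul, hσ, hσ, hσ, map_mul, ← Units.val_mul]
        congr 1
        group) }
  refine ⟨σ'.toHomUnits, M, fun g => ?_⟩
  have hg : Units.map φ.toMonoidHom (σ'.toHomUnits g) = M⁻¹ * ρ g * M := Units.ext (hσ g)
  rw [hg]
  group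

/-- The linear action on column vectors given by the matrix representation `ρ`. -/
noncomputable def mulVecRep (ρ : G →* GL (Fin n) K) : Representation K G (Fin n → K) :=
  Matrix.toLinAlgEquiv'.toRingEquiv.toMonoidHom.comp ((Units.coeHom _).comp ρ)

lemma HasForm.descends (h : HasForm K₀.toSubfield G (mulVecRep ρ).asModule) : Descends ρ K₀ := by
  obtain ⟨m, b, hb⟩ := h
  let r := mulVecRep ρ
  let std := Pi.basisFun K (Fin n)
  let c : Basis (Fin n) K (Fin n → K) :=
    (b.map r.asModuleEquiv).reindex ((b.map r.asModuleEquiv).indexEquiv std)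
  have hc (g : G) (i j : Fin n) : c.repr (r g (c j)) i ∈ K₀ := by
    rw [Basis.repr_reindex_apply, Basis.reindex_apply]
    have h := hb g
    simp only [Representation.single_smul, one_smul] at h
    exact h _ _
  let M : GL (Fin n) K := ⟨std.toMatrix c, c.toMatrix std, std.toMatrix_mul_toMatrix_flip c,
    c.toMatrix_mul_toMatrix_flip std⟩
  refine descends_of_conj_mem M fun g i j => ?_
  have hM : (M⁻¹ * ρ g * M).1 = LinearMap.toMatrix c c (r g) := by
    have hr : r g = Matrix.toLin' (ρ g).1 := rfl
    rw [← basis_toMatrix_mul_linearMap_toMatrix_mul_basis_toMatrix c std c std, hr,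
      LinearMap.toMatrix_eq_toMatrix', LinearMap.toMatrix'_toLin']
    rfl
  rw [hM, LinearMap.toMatrix_apply]
  exact hc g i j

end Descent

section TranscendenceDegree

variable {k K : Type*} [Field k] [Field K] [Algebra k K]

open IntermediateField.algebraAdjoinAdjoin in
lemma card_le_encard_of_isAlgebraic_adjoin {ι : Type*} {x : ι → K} (hx : AlgebraicIndependent k x)
    {S : Set K} (hS : ∀ i, IsAlgebraic (IntermediateField.adjoin k S) (x i)) :
    ENat.card ι ≤ S.encard := by
  let M := AlgebraicIndependent.matroid k K
  have hindep : M.Indep (Set.range x) := AlgebraicIndependent.matroid_indep_iff.2 hx.coe_range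
  have hclosure : Set.range x ⊆ M.closure S := by
    rintro _ ⟨i, rfl⟩
    rw [AlgebraicIndependent.matroid_closure_eq]
    exact (IsFractionRing.isAlgebraic_iff (Algebra.adjoin k S)
      (IntermediateField.adjoin k S) K).2 (hS i)
  calc ENat.card ι ≤ (Set.range x).encard := hx.injective.encard_range
    _ ≤ M.eRk (M.closure S) := hindep.encard_le_eRk_of_subset hclosure
    _ = M.eRk S := M.eRk_closure_eq S
    _ ≤ S.encard := M.eRk_le_encard S

lemma exists_intermediateField_fourTrdegLE {S : Finset K}
    {N : ℕ} (hS : 4 * S.card ≤ N) :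
    ∃ L : IntermediateField k K, (S : Set K) ⊆ L ∧ (∀ x, IsAlgebraic k x → x ∈ L) ∧
      FourTrdegLE L N := by
  let F := IntermediateField.adjoin k (S : Set K)
  let L := (algebraicClosure F K).restrictScalars k
  have mem_L {x : K} : x ∈ L ↔ IsAlgebraic F x := mem_algebraicClosure_iff
  refine ⟨L, fun x hx => ?_, fun x hx => mem_L.2 (hx.tower_top F), fun s hs => ?_⟩
  · exact mem_L.2 (isAlgebraic_algebraMap (⟨x, IntermediateField.subset_adjoin k _ hx⟩ : F))
  · have h := card_le_encard_of_isAlgebraic_adjoin (hs.map' (f := L.val) Subtype.val_injective)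
      fun x => mem_L.1 x.1.2
    have hcard : s.card ≤ S.card := by simpa using h
    lia

end TranscendenceDegree

theorem ed_rep_le_general (k K G : Type*) [Field k] [Field K] [Algebra k K] [Group G]
    [NeZero (Nat.card G : k)] :
    ∃ K₀ : IntermediateField k K, FourTrdegLE K₀ (Nat.card G ^ 2) ∧
      ∀ (n : ℕ) (ρ : G →* GL (Fin n) K), Descends ρ K₀ := by
  have : Finite G := Nat.finite_of_card_ne_zero fun h =>
    NeZero.ne (Nat.card G : k) (by rw [h, Nat.cast_zero])
  have : NeZero (Nat.card G : K) := ⟨by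
    rw [← map_natCast (algebraMap k K), map_ne_zero]
    exact NeZero.ne _⟩
  obtain ⟨S, hS, hforms⟩ := exists_finset_forall_hasForm (K := K) (G := G) k
  obtain ⟨K₀, hSK₀, halg, htrdeg⟩ := exists_intermediateField_fourTrdegLE (k := k) hS
  exact ⟨K₀, htrdeg, fun n ρ => (hforms K₀.toSubfield hSK₀ halg (mulVecRep ρ).asModule).descends⟩

/-- Let `k` be a field of characteristic `0`, `K/k` a field extension, `G` a finite
group, and `ρ : G → GL_n(K)` an arbitrary finite-dimensional representation.  Then `ρ`
descends to an intermediate field `k ⊆ K₀ ⊆ K` of transcendence degree at most `|G|²/4`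
over `k`. -/
theorem ed_rep_le {k : Type*} [Field k] [CharZero k]
    {K : Type*} [Field K] [Algebra k K]
    {G : Type*} [Group G] [Finite G] {n : ℕ}
    (ρ : G →* GL (Fin n) K) :
    ∃ K₀ : IntermediateField k K, Descends ρ K₀ ∧ FourTrdegLE K₀ ((Nat.card G) ^ 2) := by
  obtain ⟨K₀, htrdeg, hdesc⟩ := ed_rep_le_general k K G
  exact ⟨K₀, hdesc n ρ, htrdeg⟩
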